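/- Let K be an algebraically closed field of characteristic 0, let f and g be nonconstant, relatively prime polynomials in K[t], set A = f² − g², B = 2fg, C = f² + g², and let w ∈ K[t] be a nonzero polynomial. Then for every positive integer r, the triple (x, y, z) = (1, 1, r) is not a solution of (wA)^x + (wB)^y = (wC)^z; that is, wA + wB ≠ (wC)^r for all r ≥ 1. -/

import Mathlib

open Polynomial

/-!
Write `A = f² - g²`, `B = 2fg`, `C = f² + g²`. Cancelling `w` from `wA + wB = (wC)^r` leaves
`C ∣ A + B`. Both `4f³` and `4g³` are combinations of `C` and `A + B`, so coprimality of `f` and `g`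
forces `C ∣ 4`, and `C` is a nonzero constant. Over an extension containing a square root `i` of
`-1`, the factors of `C = (f + ig)(f - ig)` are then constant, hence so are `f` and `g`.
-/

theorem sq_add_sq_dvd_four_of_dvd {R : Type*} [CommRing R] {a b : R} (hab : IsCoprime a b)
    (h : a ^ 2 + b ^ 2 ∣ a ^ 2 - b ^ 2 + 2 * a * b) : a ^ 2 + b ^ 2 ∣ 4 := by
  have ha : a ^ 2 + b ^ 2 ∣ 4 * a ^ 3 := by
    have key : 4 * a ^ 3 =
        (3 * a - b) * (a ^ 2 + b ^ 2) + (a - b) * (a ^ 2 - b ^ 2 + 2 * a * b) := by ring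
    exact key ▸ dvd_add (dvd_mul_left _ _) (h.mul_left _)
  have hb : a ^ 2 + b ^ 2 ∣ 4 * b ^ 3 := by
    have key : 4 * b ^ 3 =
        (a + 3 * b) * (a ^ 2 + b ^ 2) - (a + b) * (a ^ 2 - b ^ 2 + 2 * a * b) := by ring
    exact key ▸ dvd_sub (dvd_mul_left _ _) (h.mul_left _)
  obtain ⟨u, v, huv⟩ : IsCoprime (a ^ 3) (b ^ 3) := hab.pow
  have four_eq : (4 : R) = u * (4 * a ^ 3) + v * (4 * b ^ 3) := by linear_combination -4 * huv
  exact four_eq ▸ dvd_add (ha.mul_left u) (hb.mul_left v)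

section

variable {R : Type*} [CommRing R] [IsDomain R] {f g : R[X]}

theorem natDegree_left_eq_zero_of_sq_add_sq_of_sq_eq_neg_one {i : R} (hi : i ^ 2 = -1)
    (h2 : (2 : R) ≠ 0) (hne : f ^ 2 + g ^ 2 ≠ 0) (hdeg : (f ^ 2 + g ^ 2).natDegree = 0) :
    f.natDegree = 0 := by
  have hCi : (C i : R[X]) ^ 2 = -1 := by rw [← C_pow, hi, C_neg, C_1]
  have hfac : f ^ 2 + g ^ 2 = (f + C i * g) * (f - C i * g) := by
    linear_combination g ^ 2 * hCi
  have natDegree_of_dvd {p : R[X]} (hp : p ∣ f ^ 2 + g ^ 2) : p.natDegree = 0 :=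
    Nat.eq_zero_of_le_zero (hdeg ▸ natDegree_le_of_dvd hp hne)
  have hplus : (f + C i * g).natDegree = 0 := natDegree_of_dvd (hfac ▸ dvd_mul_right _ _)
  have hminus : (f - C i * g).natDegree = 0 := natDegree_of_dvd (hfac ▸ dvd_mul_left _ _)
  have hsum : C 2 * f = (f + C i * g) + (f - C i * g) := by rw [C_ofNat]; ring
  have := natDegree_add_le (f + C i * g) (f - C i * g)
  rwa [← hsum, natDegree_C_mul h2, hplus, hminus, max_self, Nat.le_zero] at this

theorem natDegree_left_eq_zero_of_sq_add_sq (h2 : (2 : R) ≠ 0) (hne : f ^ 2 + g ^ 2 ≠ 0)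
    (hdeg : (f ^ 2 + g ^ 2).natDegree = 0) : f.natDegree = 0 := by
  let L := AlgebraicClosure (FractionRing R)
  let φ : R →+* L := (algebraMap (FractionRing R) L).comp (algebraMap R (FractionRing R))
  have hφ : Function.Injective φ :=
    (algebraMap (FractionRing R) L).injective.comp (IsFractionRing.injective R (FractionRing R))
  obtain ⟨i, hi⟩ := IsAlgClosed.exists_pow_nat_eq (-1 : L) two_pos
  have hmap : f.map φ ^ 2 + g.map φ ^ 2 = (f ^ 2 + g ^ 2).map φ := by
    simp only [Polynomial.map_add, Polynomial.map_pow]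
  rw [← natDegree_map_eq_of_injective hφ f]
  apply natDegree_left_eq_zero_of_sq_add_sq_of_sq_eq_neg_one (g := g.map φ) hi
  · rwa [← map_ofNat φ 2, map_ne_zero_iff φ hφ]
  · rwa [hmap, Polynomial.map_ne_zero_iff hφ]
  · rw [hmap, natDegree_map_eq_of_injective hφ, hdeg]

theorem not_sq_add_sq_dvd_sq_sub_sq_add_two_mul (h2 : (2 : R) ≠ 0)
    (hfg : IsCoprime f g) (hdeg : 0 < f.natDegree ∨ 0 < g.natDegree) :
    ¬ f ^ 2 + g ^ 2 ∣ f ^ 2 - g ^ 2 + 2 * f * g := by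
  intro hdvd
  have hdvd4 : f ^ 2 + g ^ 2 ∣ 4 := sq_add_sq_dvd_four_of_dvd hfg hdvd
  have four_ne : (4 : R[X]) ≠ 0 := by
    rw [← C_ofNat, C_ne_zero, show (OfNat.ofNat 4 : R) = 2 * 2 by norm_num]
    exact mul_ne_zero h2 h2
  have hne : f ^ 2 + g ^ 2 ≠ 0 := ne_zero_of_dvd_ne_zero four_ne hdvd4
  have hconst : (f ^ 2 + g ^ 2).natDegree = 0 :=
    Nat.eq_zero_of_le_zero (natDegree_ofNat (R := R) 4 ▸ natDegree_le_of_dvd hdvd4 four_ne)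
  rcases hdeg with hf | hg
  · exact hf.ne' (natDegree_left_eq_zero_of_sq_add_sq h2 hne hconst)
  · rw [add_comm] at hne hconst
    exact hg.ne' (natDegree_left_eq_zero_of_sq_add_sq h2 hne hconst)

end

theorem jesmanowicz_poly_not_11r_general {R : Type*} [CommRing R] [IsDomain R] (h2 : (2 : R) ≠ 0)
    (f g w : R[X]) (hdeg : 0 < f.natDegree ∨ 0 < g.natDegree) (hfg : IsCoprime f g) (hw : w ≠ 0) :
    ∀ r : ℕ, 1 ≤ r →
      w * (f ^ 2 - g ^ 2) + w * (2 * f * g) ≠ (w * (f ^ 2 + g ^ 2)) ^ r := by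
  intro r hr h
  have hdvd : w * (f ^ 2 + g ^ 2) ∣ w * (f ^ 2 - g ^ 2 + 2 * f * g) := by
    rw [mul_add w (f ^ 2 - g ^ 2), h]
    exact dvd_pow_self _ (Nat.one_le_iff_ne_zero.mp hr)
  exact not_sq_add_sq_dvd_sq_sub_sq_add_two_mul h2 hfg hdeg ((mul_dvd_mul_iff_left hw).mp hdvd)

theorem jesmanowicz_poly_not_11r
    {K : Type*} [Field K] [CharZero K] [IsAlgClosed K]
    (f g w : K[X])
    (hf : 0 < f.natDegree) (hg : 0 < g.natDegree)
    (hfg : IsCoprime f g) (hw : w ≠ 0) :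
    ∀ r : ℕ, 1 ≤ r →
      w * (f ^ 2 - g ^ 2) + w * (2 * f * g) ≠ (w * (f ^ 2 + g ^ 2)) ^ r :=
  jesmanowicz_poly_not_11r_general two_ne_zero f g w (.inl hf) hfg hw
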